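/- Let (X, d, T) be a topological dynamical system. Then for every δ ∈ (0,1), the lower metric mean dimension satisfies mdim̲_M(X,d,T) = liminf_{ε→0} (1/log(1/ε)) · sup_{μ ∈ E_T(X)} h_μ^K(ε, δ). -/

import Mathlib

open Filter MeasureTheory Set Topology

variable {X : Type*}

/-- The dynamical (Bowen) metric `d_n(x,y) = max_{0 ≤ k ≤ n-1} d(T^k x, T^k y)`. -/
noncomputable def dynDist [MetricSpace X] (T : X → X) (n : ℕ) (x y : X) : ℝ :=
  ⨆ k ∈ Finset.range n, dist (T^[k] x) (T^[k] y)

/-- The open dynamical ball `B_n(x, ε) = {y : d_n(x,y) < ε}`. -/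
def dynBall [MetricSpace X] (T : X → X) (n : ℕ) (x : X) (ε : ℝ) : Set X :=
  {y | dynDist T n x y < ε}

/-- `s_n(K, ε)`: the maximal cardinality of an `(n,ε)`-separated subset of `K`. -/
noncomputable def sepNum [MetricSpace X] (T : X → X) (n : ℕ) (K : Set X) (ε : ℝ) : ℕ :=
  sSup {m | ∃ E : Finset X, ↑E ⊆ K ∧
    (∀ x ∈ E, ∀ y ∈ E, x ≠ y → ε < dynDist T n x y) ∧ E.card = m}

/-- `S(K, ε) = limsup_n (1/n) log s_n(K, ε)`. -/
noncomputable def sepEnt [MetricSpace X] (T : X → X) (K : Set X) (ε : ℝ) : EReal :=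
  limsup (fun n : ℕ => ((Real.log (sepNum T n K ε) / n : ℝ) : EReal)) atTop

/-- `r_n(K, ε)`: the minimal cardinality of an `(n,ε)`-spanning set for `K`. -/
noncomputable def spanNum [MetricSpace X] (T : X → X) (n : ℕ) (K : Set X) (ε : ℝ) : ℕ :=
  sInf {m | ∃ F : Finset X, (∀ x ∈ K, ∃ y ∈ F, dynDist T n x y ≤ ε) ∧ F.card = m}

/-- `R(K, ε) = limsup_n (1/n) log r_n(K, ε)`. -/
noncomputable def spanEnt [MetricSpace X] (T : X → X) (K : Set X) (ε : ℝ) : EReal :=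
  limsup (fun n : ℕ => ((Real.log (spanNum T n K ε) / n : ℝ) : EReal)) atTop

/-- Upper metric mean dimension. -/
noncomputable def mdimUpper [MetricSpace X] (T : X → X) : EReal :=
  limsup (fun ε : ℝ => sepEnt T univ ε / ((Real.log (1 / ε) : ℝ) : EReal)) (𝓝[>] (0:ℝ))

/-- Lower metric mean dimension. -/
noncomputable def mdimLower [MetricSpace X] (T : X → X) : EReal :=
  liminf (fun ε : ℝ => sepEnt T univ ε / ((Real.log (1 / ε) : ℝ) : EReal)) (𝓝[>] (0:ℝ))

/-- The ergodic `T`-invariant Borel probability measures. -/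
def ergodicMeasures [MeasurableSpace X] (T : X → X) : Set (Measure X) :=
  {μ | IsProbabilityMeasure μ ∧ Ergodic T μ}

/-- `U` is a finite open cover of `X`. -/
def IsFiniteOpenCover [TopologicalSpace X] (U : Finset (Set X)) : Prop :=
  (∀ V ∈ U, IsOpen V) ∧ ⋃₀ (U : Set (Set X)) = univ

/-- The cover `U^n = ⋁_{i=0}^{n-1} T^{-i} U`. -/
def dynRefine (T : X → X) (U : Finset (Set X)) (n : ℕ) : Set (Set X) :=
  {V | ∃ f : Fin n → Set X, (∀ i, f i ∈ U) ∧ V = ⋂ i : Fin n, T^[(i : ℕ)] ⁻¹' f i}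

/-- `N(C)`: the minimal cardinality of a subcover of `C`. -/
noncomputable def coverNum (C : Set (Set X)) : ℕ :=
  sInf {m | ∃ F : Finset (Set X), ↑F ⊆ C ∧ ⋃₀ (F : Set (Set X)) = univ ∧ F.card = m}

/-- `N_μ(U^n, δ)`: minimal number of members of `U^n` needed to cover a set of measure ≥ δ. -/
noncomputable def shapiraNum [MeasurableSpace X] (T : X → X) (μ : Measure X)
    (U : Finset (Set X)) (n : ℕ) (δ : ℝ) : ℕ :=
  sInf {m | ∃ F : Finset (Set X), ↑F ⊆ dynRefine T U n ∧
    ENNReal.ofReal δ ≤ μ (⋃₀ (F : Set (Set X))) ∧ F.card = m}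

/-- Shapira's entropy `h_μ^S(U, δ) = limsup_n (1/n) log N_μ(U^n, δ)`. -/
noncomputable def shapiraEnt [MeasurableSpace X] (T : X → X) (μ : Measure X)
    (U : Finset (Set X)) (δ : ℝ) : EReal :=
  limsup (fun n : ℕ => ((Real.log (shapiraNum T μ U n δ) / n : ℝ) : EReal)) atTop

/-- `N_μ^δ(n, ε)`: smallest number of open `(n,ε)`-dynamical balls whose union has
measure `> δ`. -/
noncomputable def katokNum [MetricSpace X] [MeasurableSpace X] (T : X → X) (μ : Measure X)
    (n : ℕ) (ε δ : ℝ) : ℕ :=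
  sInf {m | ∃ F : Finset X, ENNReal.ofReal δ < μ (⋃ x ∈ F, dynBall T n x ε) ∧ F.card = m}

/-- Katok's entropy `h_μ^K(ε, δ) = limsup_n (1/n) log N_μ^δ(n, ε)`. -/
noncomputable def katokEnt [MetricSpace X] [MeasurableSpace X] (T : X → X) (μ : Measure X)
    (ε δ : ℝ) : EReal :=
  limsup (fun n : ℕ => ((Real.log (katokNum T μ n ε δ) / n : ℝ) : EReal)) atTop

/-- Lower Katok entropy `h̲_μ^K(ε, δ) = liminf_n (1/n) log N_μ^δ(n, ε)`. -/
noncomputable def katokEntLower [MetricSpace X] [MeasurableSpace X] (T : X → X) (μ : Measure X)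
    (ε δ : ℝ) : EReal :=
  liminf (fun n : ℕ => ((Real.log (katokNum T μ n ε δ) / n : ℝ) : EReal)) atTop

/-- `Ñ_μ^δ(n, ε)`: smallest number of sets of `d_n`-diameter ≤ ε whose union has
measure `> δ`. -/
noncomputable def katokNumTilde [MetricSpace X] [MeasurableSpace X] (T : X → X) (μ : Measure X)
    (n : ℕ) (ε δ : ℝ) : ℕ :=
  sInf {m | ∃ F : Finset (Set X), (∀ A ∈ F, ∀ x ∈ A, ∀ y ∈ A, dynDist T n x y ≤ ε) ∧
    ENNReal.ofReal δ < μ (⋃₀ (F : Set (Set X))) ∧ F.card = m}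

/-- Brin–Katok local entropy `h_μ^{BK}(x, ε) = limsup_n -(1/n) log μ(B_n(x, ε))`. -/
noncomputable def brinKatok [MetricSpace X] [MeasurableSpace X] (T : X → X) (μ : Measure X)
    (x : X) (ε : ℝ) : EReal :=
  limsup (fun n : ℕ => -(ENNReal.log (μ (dynBall T n x ε))) / (n : EReal)) atTop

/-- Lower Brin–Katok local entropy `h̲_μ^{BK}(x, ε) = liminf_n -(1/n) log μ(B_n(x, ε))`. -/
noncomputable def brinKatokLower [MetricSpace X] [MeasurableSpace X] (T : X → X) (μ : Measure X)
    (x : X) (ε : ℝ) : EReal :=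
  liminf (fun n : ℕ => -(ENNReal.log (μ (dynBall T n x ε))) / (n : EReal)) atTop

/-- Local entropy function `h_d(x, ε) = inf { S(K, ε) : K closed neighborhood of x }`. -/
noncomputable def locEnt [MetricSpace X] (T : X → X) (x : X) (ε : ℝ) : EReal :=
  ⨅ K ∈ {K : Set X | IsClosed K ∧ K ∈ 𝓝 x}, sepEnt T K ε

/-- Local spanning entropy `h̃_d(x, ε) = inf { R(K, ε) : K closed neighborhood of x }`. -/
noncomputable def locSpanEnt [MetricSpace X] (T : X → X) (x : X) (ε : ℝ) : EReal :=
  ⨅ K ∈ {K : Set X | IsClosed K ∧ K ∈ 𝓝 x}, spanEnt T K ε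

/-- `U_x^n`: the union of all cells of `U^n` containing `x`. -/
def dynCoverCell (T : X → X) (U : Finset (Set X)) (n : ℕ) (x : X) : Set X :=
  ⋃₀ {V | V ∈ dynRefine T U n ∧ x ∈ V}

/-!
Up to a factor `2` in the scale `ε`, which disappears after division by `log (1 / ε)`, the
supremum of the Katok entropies over ergodic measures equals `S(X, ε)`. Since maximal separated
sets are spanning, it is at most `S(X, ε)`.

Conversely, suppose every ergodic `μ` has Katok entropy less than `s`. By ergodicity almost every
point soon visits a set of measure greater than `δ` covered by `exp (n s)` balls, so some open set
of `μ`-measure close to `1` has its visits coded at rate `s` per unit of time, each miss costing a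
bounded factor. Countably many such sets serve all ergodic measures. For each of them Markov's
inequality shows that long orbit segments with few misses start in an open set of measure close to
`1`, which again has a small cover. Were the orbits of some points to keep missing all finite unions
of these new sets, a limit of empirical measures, and then by Krein–Milman an ergodic measure, would
miss them too. Hence finitely many of them are visited with high frequency by every orbit, and
coding orbits by these visits (a Kraft inequality) bounds the covering numbers of the whole space.
-/

section DynamicalDistance

variable [MetricSpace X]

/-- The first `n` points of the orbit of `x`. It realizes the Bowen metric `d_n` as the pullback
of the sup metric on `Fin n → X`. -/
def orbitSegment (T : X → X) (n : ℕ) (x : X) : Fin n → X := fun k ↦ T^[k] x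

lemma continuous_orbitSegment {T : X → X} (hT : Continuous T) (n : ℕ) :
    Continuous (orbitSegment T n) :=
  continuous_pi fun k ↦ hT.iterate k

variable (T : X → X) (n : ℕ) (x y : X)

lemma dynDist_eq_dist_orbitSegment :
    dynDist T n x y = dist (orbitSegment T n x) (orbitSegment T n y) := by
  have iSup_le : ∀ k, ⨆ _ : k ∈ Finset.range n, dist (T^[k] x) (T^[k] y) ≤
      dist (orbitSegment T n x) (orbitSegment T n y) := fun k ↦
    Real.iSup_le (fun hk ↦ dist_le_pi_dist (orbitSegment T n x) (orbitSegment T n y)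
      ⟨k, Finset.mem_range.1 hk⟩) dist_nonneg
  refine le_antisymm (Real.iSup_le iSup_le dist_nonneg) ?_
  refine (dist_pi_le_iff (Real.iSup_nonneg fun _ ↦ Real.iSup_nonneg fun _ ↦ dist_nonneg)).2
    fun k ↦ ?_
  have hk : (k : ℕ) ∈ Finset.range n := Finset.mem_range.2 k.2
  have h := le_ciSup (f := fun k ↦ ⨆ _ : k ∈ Finset.range n, dist (T^[k] x) (T^[k] y))
    ⟨_, forall_mem_range.2 iSup_le⟩ (k : ℕ)
  rwa [ciSup_pos hk] at h

lemma dynDist_self : dynDist T n x x = 0 := by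
  rw [dynDist_eq_dist_orbitSegment, dist_self]

lemma dynDist_comm : dynDist T n x y = dynDist T n y x := by
  simp only [dynDist_eq_dist_orbitSegment, dist_comm]

lemma dynDist_triangle_left (z : X) : dynDist T n x y ≤ dynDist T n z x + dynDist T n z y := by
  simpa only [dynDist_eq_dist_orbitSegment] using dist_triangle_left _ _ _

variable {n x y}

lemma dynDist_le_iff {r : ℝ} (hr : 0 ≤ r) :
    dynDist T n x y ≤ r ↔ ∀ k < n, dist (T^[k] x) (T^[k] y) ≤ r := by
  rw [dynDist_eq_dist_orbitSegment, dist_pi_le_iff hr, Fin.forall_iff]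
  rfl

variable (x y) in
lemma dist_iterate_le_dynDist {k : ℕ} (hk : k < n) :
    dist (T^[k] x) (T^[k] y) ≤ dynDist T n x y := by
  rw [dynDist_eq_dist_orbitSegment]
  exact dist_le_pi_dist (orbitSegment T n x) (orbitSegment T n y) ⟨k, hk⟩

variable (n x) in
lemma mem_dynBall_self {ε : ℝ} (hε : 0 < ε) : x ∈ dynBall T n x ε := by
  rwa [dynBall, mem_ofPred_eq, dynDist_self]

variable {T} in
lemma isOpen_dynBall (hT : Continuous T) (n : ℕ) (x : X) (ε : ℝ) : IsOpen (dynBall T n x ε) := by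
  simp only [dynBall, dynDist_eq_dist_orbitSegment]
  exact isOpen_lt (continuous_const.dist (continuous_orbitSegment hT n)) continuous_const

end DynamicalDistance

section DynamicalCovers

variable [MetricSpace X]

/-- `A` is covered by at most `a` sets of `d_n`-diameter at most `r`. The bound `a` is real so that
exponential bounds can be stated without rounding. -/
def HasDynCover (T : X → X) (r : ℝ) (n : ℕ) (A : Set X) (a : ℝ) : Prop :=
  ∃ F : Finset (Set X), (∀ B ∈ F, ∀ x ∈ B, ∀ y ∈ B, dynDist T n x y ≤ r) ∧
    A ⊆ ⋃₀ (F : Set (Set X)) ∧ (F.card : ℝ) ≤ a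

namespace HasDynCover

variable {T : X → X} {r : ℝ} {n m : ℕ} {A B : Set X} {a b : ℝ}

lemma nonneg (h : HasDynCover T r n A a) : 0 ≤ a :=
  let ⟨_, _, _, hcard⟩ := h
  (Nat.cast_nonneg _).trans hcard

lemma mono (h : HasDynCover T r n A a) (hBA : B ⊆ A) (hab : a ≤ b) : HasDynCover T r n B b :=
  let ⟨F, hdiam, hcover, hcard⟩ := h
  ⟨F, hdiam, hBA.trans hcover, hcard.trans hab⟩

lemma zero (hr : 0 ≤ r) (A : Set X) : HasDynCover T r 0 A 1 :=
  ⟨{univ}, fun _ _ _ _ _ _ ↦ (dynDist_le_iff T hr).2 (by simp), by simp, by simp⟩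

lemma empty (n : ℕ) (ha : 0 ≤ a) : HasDynCover T r n ∅ a :=
  ⟨∅, by simp, by simp, by simpa⟩

lemma union (hA : HasDynCover T r n A a) (hB : HasDynCover T r n B b) :
    HasDynCover T r n (A ∪ B) (a + b) := by
  classical
  obtain ⟨F, hFdiam, hFcover, hFcard⟩ := hA
  obtain ⟨G, hGdiam, hGcover, hGcard⟩ := hB
  refine ⟨F ∪ G, fun C hC ↦ (Finset.mem_union.1 hC).elim (hFdiam C) (hGdiam C), ?_, ?_⟩
  · rw [Finset.coe_union, sUnion_union]
    exact union_subset_union hFcover hGcover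
  · calc ((F ∪ G).card : ℝ) ≤ F.card + G.card := by exact_mod_cast Finset.card_union_le F G
      _ ≤ a + b := add_le_add hFcard hGcard

lemma biUnion {ι : Type*} {J : Finset ι} {A : ι → Set X} {a : ι → ℝ}
    (h : ∀ j ∈ J, HasDynCover T r n (A j) (a j)) :
    HasDynCover T r n (⋃ j ∈ J, A j) (∑ j ∈ J, a j) := by
  classical
  induction J using Finset.induction_on with
  | empty => simpa using empty n le_rfl
  | insert j J hj ih =>
    rw [Finset.sum_insert hj, Finset.set_biUnion_insert]
    exact (h j (by simp)).union (ih fun i hi ↦ h i (by simp [hi]))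

lemma inter_preimage (hr : 0 ≤ r) (hA : HasDynCover T r n A a) (hB : HasDynCover T r m B b) :
    HasDynCover T r (n + m) (A ∩ T^[n] ⁻¹' B) (a * b) := by
  classical
  have ha := hA.nonneg
  obtain ⟨F, hFdiam, hFcover, hFcard⟩ := hA
  obtain ⟨G, hGdiam, hGcover, hGcard⟩ := hB
  refine ⟨Finset.image₂ (fun C D ↦ C ∩ T^[n] ⁻¹' D) F G, ?_, ?_, ?_⟩
  · simp only [Finset.forall_mem_image₂]
    rintro C hC D hD x ⟨hxC, hxD⟩ y ⟨hyC, hyD⟩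
    refine (dynDist_le_iff T hr).2 fun k hk ↦ ?_
    rcases lt_or_ge k n with hkn | hnk
    · exact (dist_iterate_le_dynDist T x y hkn).trans (hFdiam C hC x hxC y hyC)
    · obtain ⟨l, rfl⟩ := Nat.exists_eq_add_of_le' hnk
      simp only [Function.iterate_add_apply]
      exact (dist_iterate_le_dynDist T _ _ (Nat.add_lt_add_iff_left.1 (add_comm l n ▸ hk))).trans
        (hGdiam D hD _ hxD _ hyD)
  · rintro x ⟨hxA, hxB⟩
    obtain ⟨C, hC, hxC⟩ := hFcover hxA
    obtain ⟨D, hD, hxD⟩ := hGcover hxB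
    exact ⟨_, Finset.mem_image₂_of_mem hC hD, hxC, hxD⟩
  · calc ((Finset.image₂ (fun C D ↦ C ∩ T^[n] ⁻¹' D) F G).card : ℝ) ≤ F.card * G.card := by
          exact_mod_cast Finset.card_image₂_le _ F G
      _ ≤ a * b := mul_le_mul hFcard hGcard (Nat.cast_nonneg _) ha

lemma univ_pow (hr : 0 ≤ r) (h : HasDynCover T r 1 univ a) (n : ℕ) :
    HasDynCover T r n univ (a ^ n) := by
  induction n with
  | zero => simpa using zero hr univ
  | succ n ih => simpa [pow_succ] using ih.inter_preimage hr h

end HasDynCover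

end DynamicalCovers

section Visits

/-- The number of times `k < N` at which the orbit of `x` is outside `U`. -/
noncomputable def missCount (T : X → X) (U : Set X) (N : ℕ) (x : X) : ℕ :=
  birkhoffSum T (Uᶜ.indicator 1) N x

/-- The points whose orbit is outside `U` at most `b` times before time `N`. -/
def fewMisses (T : X → X) (U : Set X) (N b : ℕ) : Set X := {x | missCount T U N x ≤ b}

variable (T : X → X) (U : Set X)

lemma missCount_add (m n : ℕ) (x : X) :
    missCount T U (m + n) x = missCount T U m x + missCount T U n (T^[m] x) :=
  birkhoffSum_add _ _ _ _ _

lemma missCount_one_of_notMem {x : X} (hx : x ∉ U) : missCount T U 1 x = 1 := by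
  simp [missCount, hx]

variable {U} in
lemma missCount_anti {V : Set X} (h : U ⊆ V) (N : ℕ) (x : X) :
    missCount T V N x ≤ missCount T U N x := by
  simp only [missCount, birkhoffSum]
  gcongr

variable {U} in
lemma fewMisses_mono {V : Set X} (h : U ⊆ V) (N b : ℕ) : fewMisses T U N b ⊆ fewMisses T V N b :=
  fun x hx ↦ (missCount_anti T h N x).trans hx

lemma fewMisses_add_subset_preimage (m n b : ℕ) :
    fewMisses T U (m + n) b ⊆ T^[m] ⁻¹' fewMisses T U n b := by
  intro x (hx : missCount T U (m + n) x ≤ b)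
  rw [missCount_add] at hx
  exact le_of_add_le_right hx

lemma compl_inter_fewMisses_zero {N : ℕ} (hN : 0 < N) : Uᶜ ∩ fewMisses T U N 0 = ∅ := by
  obtain ⟨N, rfl⟩ := Nat.exists_eq_add_of_lt hN
  refine eq_empty_of_forall_notMem fun x ⟨hxU, (hx : missCount T U (0 + N + 1) x ≤ 0)⟩ ↦ ?_
  rw [zero_add, add_comm, missCount_add, missCount_one_of_notMem T U hxU] at hx
  lia

lemma compl_inter_fewMisses_succ_subset_preimage (N b : ℕ) :
    Uᶜ ∩ fewMisses T U (1 + N) (b + 1) ⊆ T^[1] ⁻¹' fewMisses T U N b := by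
  rintro x ⟨hxU, hx : missCount T U (1 + N) x ≤ b + 1⟩
  rw [missCount_add, missCount_one_of_notMem T U hxU] at hx
  change missCount T U N (T^[1] x) ≤ b
  lia

end Visits

section Coding

variable [MetricSpace X]

/-- The `d_N`-covering numbers of the points whose orbit misses `U` at most `b` times grow at most
like `exp (s * N + β * b)`: time spent inside `U` costs `s` per step, each miss costs `β`. -/
def IsCodable (T : X → X) (r s β : ℝ) (U : Set X) : Prop :=
  ∃ C : ℝ, ∀ N b : ℕ, HasDynCover T r N (fewMisses T U N b) (C * Real.exp (s * N + β * b))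

variable {T : X → X} {r s β : ℝ}

lemma IsCodable.anti {U V : Set X} (hV : IsCodable T r s β V) (h : U ⊆ V) :
    IsCodable T r s β U :=
  let ⟨C, hC⟩ := hV
  ⟨C, fun N b ↦ (hC N b).mono (fewMisses_mono T h N b) le_rfl⟩

variable {ι : Type*} {J : Finset ι} {n : ι → ℕ} {A : ι → Set X} {a : ι → ℝ} {P : ℝ}

/- An itinerary of length `N` starts either with a word of length `n j` coding a visit to `A j`, or
with a single miss. The Kraft inequality `hkraft` says that the corresponding bounds add up to at
most the bound claimed for `N`. -/
lemma hasDynCover_fewMisses_of_forall_lt (hr : 0 ≤ r) (hs : 0 ≤ s)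
    (hA : ∀ j ∈ J, HasDynCover T r (n j) (A j) (a j)) (hP : HasDynCover T r 1 univ P)
    (hkraft : ∑ j ∈ J, a j * Real.exp (-(s * n j)) + P * Real.exp (-β) ≤ 1)
    {N : ℕ} (hN : 0 < N) (hn : ∀ j ∈ J, n j ∈ Icc 1 N) {C : ℝ}
    (ih : ∀ N' < N, ∀ b : ℕ, HasDynCover T r N' (fewMisses T (⋃ j ∈ J, A j) N' b)
      (C * Real.exp (s * N' + β * b))) (b : ℕ) :
    HasDynCover T r N (fewMisses T (⋃ j ∈ J, A j) N b) (C * Real.exp (s * N + β * b)) := by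
  set U := ⋃ j ∈ J, A j
  have hC : 0 ≤ C := nonneg_of_mul_nonneg_left (ih 0 hN 0).nonneg (Real.exp_pos _)
  set Z := C * Real.exp (s * N + β * b) with hZ
  have hZ_nonneg : 0 ≤ Z := mul_nonneg hC (Real.exp_pos _).le
  have cover_of_mem : ∀ j ∈ J, HasDynCover T r N (A j ∩ fewMisses T U N b)
      (a j * Real.exp (-(s * n j)) * Z) := by
    intro j hj
    obtain ⟨hj1, hjN⟩ := hn j hj
    obtain ⟨k, rfl⟩ := Nat.exists_eq_add_of_le hjN
    refine ((hA j hj).inter_preimage hr (ih k (by lia) b)).mono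
      (inter_subset_inter_right _ (fewMisses_add_subset_preimage T U _ _ _)) (le_of_eq ?_)
    rw [hZ, mul_assoc, mul_left_comm (Real.exp _), ← Real.exp_add]
    congr 3
    push_cast
    ring
  have cover_of_notMem : HasDynCover T r N (Uᶜ ∩ fewMisses T U N b) (P * Real.exp (-β) * Z) := by
    rcases b with _ | b
    · rw [compl_inter_fewMisses_zero T U hN]
      exact .empty _ (mul_nonneg (mul_nonneg hP.nonneg (Real.exp_pos _).le) hZ_nonneg)
    · obtain ⟨k, rfl⟩ := Nat.exists_eq_add_of_le (show 1 ≤ N from hN)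
      refine (hP.inter_preimage hr (ih k (by lia) b)).mono (subset_inter (subset_univ _)
        (compl_inter_fewMisses_succ_subset_preimage T U k b)) ?_
      rw [hZ, mul_assoc, mul_left_comm (Real.exp _), ← Real.exp_add]
      refine mul_le_mul_of_nonneg_left (mul_le_mul_of_nonneg_left (Real.exp_le_exp.2 ?_) hC)
        hP.nonneg
      push_cast
      linarith
  refine ((HasDynCover.biUnion cover_of_mem).union cover_of_notMem).mono ?_ ?_
  · rw [← iUnion₂_inter, ← union_inter_distrib_right, union_compl_self, univ_inter]
  · rw [← Finset.sum_mul, ← add_mul]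
    exact mul_le_of_le_one_left hZ_nonneg hkraft

lemma isCodable_biUnion (hr : 0 ≤ r) (hs : 0 ≤ s) (hβ : 0 ≤ β) (hn : ∀ j ∈ J, 1 ≤ n j)
    (hA : ∀ j ∈ J, HasDynCover T r (n j) (A j) (a j)) (hP : HasDynCover T r 1 univ P)
    (hkraft : ∑ j ∈ J, a j * Real.exp (-(s * n j)) + P * Real.exp (-β) ≤ 1) :
    IsCodable T r s β (⋃ j ∈ J, A j) := by
  set M := ∑ j ∈ J, n j
  refine ⟨max 1 P ^ M, fun N ↦ ?_⟩
  induction N using Nat.strong_induction_on with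
  | _ N ih =>
    rcases le_or_gt N M with hNM | hMN
    · intro b
      refine (hP.univ_pow hr N).mono (subset_univ _) ?_
      calc P ^ N ≤ max 1 P ^ N := pow_le_pow_left₀ hP.nonneg (le_max_right _ _) N
        _ ≤ max 1 P ^ M := pow_le_pow_right₀ (le_max_left _ _) hNM
        _ ≤ max 1 P ^ M * Real.exp (s * N + β * b) :=
          le_mul_of_one_le_right (by positivity) (Real.one_le_exp (by positivity))
    · have hnN : ∀ j ∈ J, n j ≤ N := fun j hj ↦
        (Finset.single_le_sum (f := n) (fun _ _ ↦ Nat.zero_le _) hj).trans hMN.le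
      exact hasDynCover_fewMisses_of_forall_lt hr hs hA hP hkraft (M.zero_le.trans_lt hMN)
        (fun j hj ↦ ⟨hn j hj, hnN j hj⟩) ih

end Coding

section ErgodicMeasures

lemma ennreal_le_of_le_convex_combination {M u v a b : ENNReal} (hM : M ≠ ⊤) (ha : 0 < a)
    (hab : a + b = 1) (hv : v ≤ M) (h : M ≤ a * u + b * v) : M ≤ u := by
  have haM : a * M ≤ a * u := by
    refine ENNReal.le_of_add_le_add_right (a := b * M) ?_ ?_
    · exact ENNReal.mul_ne_top (ne_top_of_le_ne_top ENNReal.one_ne_top (hab ▸ le_add_self)) hM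
    · calc a * M + b * M = M := by rw [← add_mul, hab, one_mul]
        _ ≤ a * u + b * v := h
        _ ≤ a * u + b * M := by gcongr
  exact (ENNReal.mul_le_mul_iff_right ha.ne'
    (ne_top_of_le_ne_top ENNReal.one_ne_top (hab ▸ le_self_add))).1 haM

lemma isExtreme_setOf_forall_measure_le [MeasurableSpace X] {S : Set (Measure X)} {C : Set X}
    (hfin : ∀ ν ∈ S, ν C ≠ ⊤) :
    IsExtreme ENNReal S {ν ∈ S | ∀ ν' ∈ S, ν' C ≤ ν C} where
  subset _ hν := hν.1
  left_mem_of_mem_openSegment := by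
    rintro α hα β hβ _ ⟨hμS, hμmax⟩ ⟨a, b, ha, -, hab, rfl⟩
    refine ⟨hα, fun ν hν ↦ (hμmax ν hν).trans ?_⟩
    refine ennreal_le_of_le_convex_combination (hfin _ hμS) ha hab (hμmax β hβ) ?_
    simp

variable [TopologicalSpace X] [MeasurableSpace X] [BorelSpace X] [HasOuterApproxClosed X]

lemma upperSemicontinuous_probabilityMeasure_apply {C : Set X} (hC : IsClosed C) :
    UpperSemicontinuous fun ν : ProbabilityMeasure X ↦ (ν : Measure X) C :=
  upperSemicontinuous_iff_limsup_le.2 fun _ ↦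
    ProbabilityMeasure.limsup_measure_closed_le_of_tendsto tendsto_id hC

lemma isClosed_setOf_measurePreserving {T : X → X} (hT : Continuous T) :
    IsClosed {ν : ProbabilityMeasure X | MeasurePreserving T (ν : Measure X) ν} := by
  convert isClosed_eq (ProbabilityMeasure.continuous_map hT) continuous_id using 3 with ν
  rw [← ProbabilityMeasure.toMeasure_injective.eq_iff]
  exact ⟨fun h ↦ h.map_eq, fun h ↦ ⟨hT.measurable, h⟩⟩

/- Integration against bounded continuous functions embeds the probability measures in the locally
convex space of real functions on `C_b(X)`, where the Krein-Milman theorem applies. -/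
lemma exists_mem_extremePoints_toMeasure_image {K : Set (ProbabilityMeasure X)} (hK : IsCompact K)
    (hne : K.Nonempty) :
    (extremePoints ENNReal (ProbabilityMeasure.toMeasure '' K)).Nonempty := by
  set φ : ProbabilityMeasure X → BoundedContinuousFunction X ℝ → ℝ := fun ν f ↦ ∫ x, f x ∂ν
  have hφ_cont : Continuous φ :=
    continuous_pi ProbabilityMeasure.continuous_integral_boundedContinuousFunction
  have hφ_inj : Function.Injective φ := fun α β h ↦ ProbabilityMeasure.toMeasure_injective <|
    ext_of_forall_integral_eq_of_IsFiniteMeasure <| congrFun h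
  obtain ⟨_, ⟨μ, hμK, rfl⟩, hμ⟩ := (hK.image hφ_cont).extremePoints_nonempty (hne.image φ)
  refine ⟨μ, mem_image_of_mem _ hμK, ?_⟩
  rintro _ ⟨α, hα, rfl⟩ _ ⟨β, hβ, rfl⟩ ⟨a, b, ha, hb, hab, habμ⟩
  have ha_top : a ≠ ⊤ := ne_top_of_le_ne_top ENNReal.one_ne_top (hab ▸ le_self_add)
  have hb_top : b ≠ ⊤ := ne_top_of_le_ne_top ENNReal.one_ne_top (hab ▸ le_add_self)
  rw [hφ_inj (hμ (mem_image_of_mem φ hα) (mem_image_of_mem φ hβ) ⟨a.toReal, b.toReal,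
    ENNReal.toReal_pos ha.ne' ha_top, ENNReal.toReal_pos hb.ne' hb_top, ?_, ?_⟩)]
  · rw [← ENNReal.toReal_add ha_top hb_top, hab, ENNReal.toReal_one]
  · funext f
    simp only [φ, ← habμ, Pi.add_apply, Pi.smul_apply, smul_eq_mul]
    rw [integral_add_measure ((f.integrable _).smul_measure ha_top)
      ((f.integrable _).smul_measure hb_top), integral_smul_measure, integral_smul_measure]
    rfl

/- The invariant measures maximizing the mass of `C` form a compact face of the set of all invariant
measures; an extreme point of this face is an extreme invariant measure, that is, ergodic. -/
lemma exists_mem_ergodicMeasures_measure_le [T2Space X] [CompactSpace X] {T : X → X}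
    (hT : Continuous T) {C : Set X} (hC : IsClosed C) (ν : ProbabilityMeasure X)
    (hν : MeasurePreserving T (ν : Measure X) ν) :
    ∃ μ ∈ ergodicMeasures T, (ν : Measure X) C ≤ μ C := by
  set I := {ν : ProbabilityMeasure X | MeasurePreserving T (ν : Measure X) ν}
  have hI : IsClosed I := isClosed_setOf_measurePreserving hT
  have husc := upperSemicontinuous_probabilityMeasure_apply hC
  obtain ⟨m, hmI, hm⟩ :=
    UpperSemicontinuousOn.exists_isMaxOn ⟨ν, hν⟩ hI.isCompact (husc.upperSemicontinuousOn I)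
  set F := I ∩ {ν | (m : Measure X) C ≤ (ν : Measure X) C}
  have hF : IsCompact F := (hI.inter (husc.isClosed_preimage _)).isCompact
  obtain ⟨μ, hμ⟩ := exists_mem_extremePoints_toMeasure_image hF ⟨m, hmI, le_refl (_ : ENNReal)⟩
  set S := {ν : Measure X | MeasurePreserving T ν ν ∧ IsProbabilityMeasure ν}
  have hFS : ProbabilityMeasure.toMeasure '' F = {ν ∈ S | ∀ ν' ∈ S, ν' C ≤ ν C} := by
    ext ν
    constructor
    · rintro ⟨ν, ⟨hνI, hνm⟩, rfl⟩
      exact ⟨⟨hνI, inferInstance⟩, fun ν' hν' ↦ le_trans (hm (a := ⟨ν', hν'.2⟩) hν'.1) hνm⟩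
    · rintro ⟨⟨hνT, hν⟩, hνmax⟩
      exact ⟨⟨ν, hν⟩, ⟨hνT, hνmax m ⟨hmI, inferInstance⟩⟩, rfl⟩
  obtain ⟨μ, hμF, rfl⟩ := hμ.1
  refine ⟨μ, ⟨inferInstance, Ergodic.of_mem_extremePoints ?_⟩, (hm hν).trans hμF.2⟩
  rw [hFS] at hμ
  refine (isExtreme_setOf_forall_measure_le ?_).extremePoints_subset_extremePoints hμ
  rintro ν ⟨-, hν⟩
  exact measure_ne_top ν C

end ErgodicMeasures

section EmpiricalMeasures

variable [MeasurableSpace X]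

/-- The empirical measure: the uniform distribution on the first `N` points of the orbit of `x`,
with multiplicities. It is a probability measure as soon as `N ≠ 0`. -/
noncomputable def empiricalMeasure (T : X → X) (N : ℕ) (x : X) : Measure X :=
  (N : ENNReal)⁻¹ • ∑ k ∈ Finset.range N, Measure.dirac (T^[k] x)

variable {T : X → X}

lemma isProbabilityMeasure_empiricalMeasure (T : X → X) {N : ℕ} (hN : N ≠ 0) (x : X) :
    IsProbabilityMeasure (empiricalMeasure T N x) where
  measure_univ := by
    simpa [empiricalMeasure] using ENNReal.inv_mul_cancel (by simpa) (by simp)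

lemma empiricalMeasure_compl (T : X → X) (N : ℕ) (x : X) {U : Set X} (hU : MeasurableSet U) :
    empiricalMeasure T N x Uᶜ = (N : ENNReal)⁻¹ * missCount T U N x := by
  simp only [empiricalMeasure, Measure.smul_apply, Measure.finsetSum_apply, smul_eq_mul, missCount,
    birkhoffSum, Measure.dirac_apply' _ hU.compl, Nat.cast_sum]
  congr! 2 with k
  by_cases hk : T^[k] x ∈ U <;> simp [hk]

lemma ofReal_le_empiricalMeasure_compl {N : ℕ} (hN : N ≠ 0) {x : X} {U : Set X}
    (hU : MeasurableSet U) {θ : ℝ} (h : θ * N ≤ missCount T U N x) :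
    ENNReal.ofReal θ ≤ empiricalMeasure T N x Uᶜ := by
  rw [empiricalMeasure_compl T N x hU, ← ENNReal.div_eq_inv_mul,
    ENNReal.le_div_iff_mul_le (by simp [hN]) (by simp)]
  calc ENNReal.ofReal θ * N = ENNReal.ofReal (θ * N) := by
        rw [ENNReal.ofReal_mul' (Nat.cast_nonneg _), ENNReal.ofReal_natCast]
    _ ≤ missCount T U N x := ENNReal.ofReal_le_of_le_toReal (by simpa)

variable [TopologicalSpace X] [BorelSpace X]

lemma integral_empiricalMeasure (T : X → X) (N : ℕ) (x : X)
    (f : BoundedContinuousFunction X ℝ) :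
    ∫ y, f y ∂empiricalMeasure T N x = birkhoffAverage ℝ T f N x := by
  rw [empiricalMeasure, integral_smul_measure,
    integral_finsetSum_measure fun _ _ ↦ f.integrable _, birkhoffAverage, birkhoffSum]
  simp [integral_dirac' _ _ f.continuous.stronglyMeasurable]

lemma dist_integral_comp_empiricalMeasure_le (hT : Continuous T) (N : ℕ) (x : X)
    (f : BoundedContinuousFunction X ℝ) :
    dist (∫ y, f (T y) ∂empiricalMeasure T N x) (∫ y, f y ∂empiricalMeasure T N x) ≤
      2 * ‖f‖ / N := by
  have hcomp : ∫ y, f (T y) ∂empiricalMeasure T N x = birkhoffAverage ℝ T f N (T x) := by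
    refine (integral_empiricalMeasure T N x (f.compContinuous ⟨T, hT⟩)).trans ?_
    simp only [birkhoffAverage, birkhoffSum, BoundedContinuousFunction.compContinuous_apply,
      ContinuousMap.coe_mk, ← Function.iterate_succ_apply, ← Function.iterate_succ_apply']
  rw [hcomp, integral_empiricalMeasure, dist_birkhoffAverage_apply_birkhoffAverage]
  gcongr
  exact f.dist_le_two_norm _ _

variable [HasOuterApproxClosed X]

lemma measurePreserving_of_tendsto_empiricalMeasure (hT : Continuous T) {ι : Type*} {l : Filter ι}
    [l.NeBot] {N : ι → ℕ} (hN : Tendsto N l atTop) {x : ι → X} {ν : ι → ProbabilityMeasure X}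
    (hν : ∀ i, (ν i : Measure X) = empiricalMeasure T (N i) (x i)) {μ : ProbabilityMeasure X}
    (hlim : Tendsto ν l (𝓝 μ)) : MeasurePreserving T (μ : Measure X) μ := by
  refine ⟨hT.measurable, ?_⟩
  have : IsProbabilityMeasure ((μ : Measure X).map T) :=
    Measure.isProbabilityMeasure_map hT.aemeasurable
  refine ext_of_forall_integral_eq_of_IsFiniteMeasure fun f ↦ ?_
  rw [integral_map hT.aemeasurable f.continuous.aestronglyMeasurable]
  have tendsto_integral := ProbabilityMeasure.tendsto_iff_forall_integral_tendsto.1 hlim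
  have tendsto_dist : Tendsto (fun i ↦ dist (∫ y, f (T y) ∂ν i) (∫ y, f y ∂ν i)) l (𝓝 0) := by
    simp only [hν]
    refine squeeze_zero (fun _ ↦ dist_nonneg)
      (fun i ↦ dist_integral_comp_empiricalMeasure_le hT (N i) (x i) f) ?_
    exact (tendsto_natCast_atTop_atTop.comp hN).const_div_atTop _
  exact dist_eq_zero.1 <| tendsto_nhds_unique
    ((tendsto_integral (f.compContinuous ⟨T, hT⟩)).dist (tendsto_integral f)) tendsto_dist

variable [T2Space X] [CompactSpace X] {G : ℕ → Set X} {θ : ℝ}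

lemma exists_measurePreserving_le_measure_compl_iUnion (hT : Continuous T)
    (hG : ∀ q, IsOpen (G q)) (hG_mono : Monotone G) {N : ℕ → ℕ} (hN : Tendsto N atTop atTop)
    (hN_ne : ∀ q, N q ≠ 0) {x : ℕ → X} (hx : ∀ q, θ * N q ≤ missCount T (G q) (N q) (x q)) :
    ∃ μ : ProbabilityMeasure X, MeasurePreserving T (μ : Measure X) μ ∧
      ENNReal.ofReal θ ≤ (μ : Measure X) (⋃ q, G q)ᶜ := by
  let ν (q : ℕ) : ProbabilityMeasure X :=
    ⟨empiricalMeasure T (N q) (x q), isProbabilityMeasure_empiricalMeasure T (hN_ne q) (x q)⟩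
  obtain ⟨μ, hlim⟩ : ∃ μ, Tendsto ν (hyperfilter ℕ) (𝓝 μ) :=
    ⟨_, ((hyperfilter ℕ).map ν).le_nhds_lim⟩
  refine ⟨μ, measurePreserving_of_tendsto_empiricalMeasure hT
    (hN.mono_left Nat.hyperfilter_le_atTop) (fun _ ↦ rfl) hlim, ?_⟩
  have le_measure_compl : ∀ p, ENNReal.ofReal θ ≤ (μ : Measure X) (G p)ᶜ := by
    intro p
    refine le_trans ?_ (ProbabilityMeasure.limsup_measure_closed_le_of_tendsto hlim
      (hG p).isClosed_compl)
    refine le_limsup_of_frequently_le (Eventually.frequently ?_)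
    filter_upwards [Nat.hyperfilter_le_atTop (eventually_ge_atTop p)] with q hpq
    exact (ofReal_le_empiricalMeasure_compl (hN_ne q) (hG q).measurableSet (hx q)).trans
      (measure_mono (compl_subset_compl.2 (hG_mono hpq)))
  rw [compl_iUnion]
  exact ge_of_tendsto' (tendsto_measure_iInter_atTop
    (fun q ↦ (hG q).measurableSet.compl.nullMeasurableSet)
    (fun p q hpq ↦ compl_subset_compl.2 (hG_mono hpq)) ⟨0, measure_ne_top _ _⟩) le_measure_compl

lemma exists_forall_missCount_le (hT : Continuous T) (hG : ∀ q, IsOpen (G q))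
    (hG_mono : Monotone G)
    (hθ : ∀ μ ∈ ergodicMeasures T, μ (⋃ q, G q)ᶜ < ENNReal.ofReal θ) :
    ∃ q N₀ : ℕ, ∀ N ≥ N₀, ∀ x, (missCount T (G q) N x : ℝ) ≤ θ * N := by
  by_contra! hcon
  choose N hN x hx using fun q : ℕ ↦ hcon q (q + 1)
  obtain ⟨ν, hν, hθν⟩ := exists_measurePreserving_le_measure_compl_iUnion hT hG hG_mono
    (tendsto_atTop_mono (fun q ↦ q.le_succ.trans (hN q)) tendsto_id)
    (fun q ↦ (q.succ_pos.trans_le (hN q)).ne') fun q ↦ (hx q).le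
  obtain ⟨μ, hμ, hνμ⟩ :=
    exists_mem_ergodicMeasures_measure_le hT (isOpen_iUnion hG).isClosed_compl ν hν
  exact (hθ μ hμ).not_ge (hθν.trans hνμ)

lemma ergodicMeasures_nonempty [Nonempty X] (hT : Continuous T) : (ergodicMeasures T).Nonempty := by
  obtain ⟨ν, hν, -⟩ := exists_measurePreserving_le_measure_compl_iUnion (θ := 0) hT
    (fun _ ↦ isOpen_empty) monotone_const (tendsto_add_atTop_nat 1) Nat.succ_ne_zero
    (x := fun _ ↦ Classical.arbitrary X) (by simp)
  obtain ⟨μ, hμ, -⟩ := exists_mem_ergodicMeasures_measure_le hT isClosed_univ ν hν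
  exact ⟨μ, hμ⟩

end EmpiricalMeasures

section MissFrequency

variable {T : X → X} {U : Set X}

section Topological

variable [TopologicalSpace X]

lemma upperSemicontinuous_missCount (hT : Continuous T) (hU : IsOpen U) (N : ℕ) :
    UpperSemicontinuous (missCount T U N) :=
  upperSemicontinuous_sum (a := Finset.range N) fun k _ ↦
    (hU.isClosed_compl.upperSemicontinuous_indicator zero_le_one).comp (hT.iterate k)

lemma isOpen_fewMisses (hT : Continuous T) (hU : IsOpen U) (N b : ℕ) :
    IsOpen (fewMisses T U N b) := by
  simpa only [fewMisses, ← Nat.lt_add_one_iff, preimage, mem_Iio] using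
    (upperSemicontinuous_missCount hT hU N).isOpen_preimage (b + 1)

end Topological

variable [MeasurableSpace X] {μ : Measure X}

lemma measurable_missCount (hT : Measurable T) (hU : MeasurableSet U) (N : ℕ) :
    Measurable (missCount T U N) :=
  Finset.measurable_fun_sum (Finset.range N) fun k _ ↦
    (measurable_const.indicator hU.compl).comp (hT.iterate k)

lemma lintegral_missCount (hT : MeasurePreserving T μ μ) (hU : MeasurableSet U) (N : ℕ) :
    ∫⁻ x, missCount T U N x ∂μ = N * μ Uᶜ := by
  have hcast : ∀ y, ((Uᶜ.indicator 1 y : ℕ) : ENNReal) = Uᶜ.indicator 1 y := fun y ↦ by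
    by_cases hy : y ∈ U <;> simp [hy]
  have hmeas : Measurable (Uᶜ.indicator (1 : X → ENNReal)) := measurable_one.indicator hU.compl
  simp only [missCount, birkhoffSum, Nat.cast_sum, hcast]
  rw [lintegral_finsetSum (f := fun k x ↦ Uᶜ.indicator 1 (T^[k] x)) _
    fun k _ ↦ hmeas.comp (hT.iterate k).measurable]
  simp only [(hT.iterate _).lintegral_comp hmeas, lintegral_indicator_one hU.compl,
    Finset.sum_const, Finset.card_range, nsmul_eq_mul]

lemma measure_compl_fewMisses_le (hT : MeasurePreserving T μ μ) (hU : MeasurableSet U) {θ κ : ℝ}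
    (hθ : 0 < θ) (h : μ Uᶜ ≤ ENNReal.ofReal (θ * κ)) (N : ℕ) :
    μ (fewMisses T U N ⌊θ * N⌋₊)ᶜ ≤ ENNReal.ofReal κ := by
  rcases N.eq_zero_or_pos with rfl | hN
  · simp [fewMisses, missCount]
  have hθN : 0 < θ * N := by positivity
  have hsub : (fewMisses T U N ⌊θ * N⌋₊)ᶜ ⊆
      {x | ENNReal.ofReal (θ * N) ≤ missCount T U N x} := by
    intro x (hx : ¬missCount T U N x ≤ ⌊θ * N⌋₊)
    exact ENNReal.ofReal_le_of_le_toReal (by simpa using (Nat.lt_of_floor_lt (not_le.1 hx)).le)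
  refine (ENNReal.mul_le_mul_iff_right (ENNReal.ofReal_pos.2 hθN).ne' ENNReal.ofReal_ne_top).1 ?_
  calc ENNReal.ofReal (θ * N) * μ (fewMisses T U N ⌊θ * N⌋₊)ᶜ
      ≤ ENNReal.ofReal (θ * N) * μ {x | ENNReal.ofReal (θ * N) ≤ missCount T U N x} := by gcongr
    _ ≤ ∫⁻ x, missCount T U N x ∂μ :=
      mul_meas_ge_le_lintegral
        (measurable_from_top.comp (measurable_missCount hT.measurable hU N)) _
    _ = N * μ Uᶜ := lintegral_missCount hT hU N
    _ ≤ N * ENNReal.ofReal (θ * κ) := by gcongr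
    _ = ENNReal.ofReal (θ * N) * ENNReal.ofReal κ := by
      rw [← ENNReal.ofReal_natCast, ← ENNReal.ofReal_mul (Nat.cast_nonneg _),
        ← ENNReal.ofReal_mul hθN.le]
      ring_nf

end MissFrequency

section ReturnWindows

lemma exists_countable_isOpen_approx [TopologicalSpace X] [SecondCountableTopology X]
    [MeasurableSpace X] [OpensMeasurableSpace X] :
    ∃ 𝒲 : Set (Set X), 𝒲.Countable ∧ (∀ W ∈ 𝒲, IsOpen W) ∧
      ∀ (μ : Measure X) [IsProbabilityMeasure μ] (U : Set X) (c : ENNReal), IsOpen U → c < μ U →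
        ∃ W ∈ 𝒲, W ⊆ U ∧ c < μ W := by
  have hb := TopologicalSpace.isBasis_countableBasis X
  refine ⟨sUnion '' {F | F.Finite ∧ F ⊆ TopologicalSpace.countableBasis X},
    (countable_ofPred_finite_subset (TopologicalSpace.countable_countableBasis X)).image _, ?_, ?_⟩
  · rintro _ ⟨F, ⟨-, hF⟩, rfl⟩
    exact isOpen_sUnion fun V hV ↦ hb.isOpen (hF hV)
  · intro μ _ U c hU hc
    lift c to NNReal using hc.ne_top
    have small_nhds : ∀ V : Set X, IsOpen V → ∀ x ∈ V,
        ∃ B ∈ TopologicalSpace.countableBasis X, B ∈ 𝓝 x ∧ B ⊆ V := by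
      intro V hV x hx
      obtain ⟨B, hB, hxB, hBV⟩ := hb.exists_subset_of_mem_open hx hV
      exact ⟨B, hB, (hb.isOpen hB).mem_nhds hxB, hBV⟩
    let ν : ProbabilityMeasure X := ⟨μ, inferInstance⟩
    obtain ⟨F, hFb, hcF, hFU⟩ := ν.exists_lt_measure_biUnion_of_isOpen small_nhds hU
      (r := c) (by rwa [← ENNReal.coe_lt_coe, ν.ennreal_coeFn_eq_coeFn_toMeasure])
    rw [← ENNReal.coe_lt_coe, ν.ennreal_coeFn_eq_coeFn_toMeasure] at hcF
    refine ⟨⋃₀ F, mem_image_of_mem _ ⟨F.finite_toSet, hFb⟩, ?_⟩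
    rw [sUnion_eq_biUnion]
    exact ⟨hFU, hcF⟩

lemma le_measure_limsup_of_frequently [MeasurableSpace X] {μ : Measure X} [IsFiniteMeasure μ]
    {A : ℕ → Set X} (hA : ∀ n, MeasurableSet (A n)) {δ : ENNReal}
    (hAδ : ∃ᶠ n in atTop, δ ≤ μ (A n)) : δ ≤ μ (limsup A atTop) := by
  rw [limsup_eq_iInf_iSup_of_nat]
  simp only [iSup_eq_iUnion, iInf_eq_iInter]
  have hanti : Antitone fun L ↦ ⋃ n ≥ L, A n := fun L M h ↦
    biUnion_subset_biUnion_left fun n (hn : M ≤ n) ↦ h.trans hn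
  refine ge_of_tendsto' (tendsto_measure_iInter_atTop (fun L ↦ (MeasurableSet.iUnion fun n ↦
    .iUnion fun _ ↦ hA n).nullMeasurableSet) hanti ⟨0, measure_ne_top _ _⟩) fun L ↦ ?_
  obtain ⟨n, hLn, hn⟩ := frequently_atTop.1 hAδ L
  exact hn.trans (measure_mono (subset_biUnion_of_mem (u := A) (s := {n | L ≤ n}) hLn))

variable [MeasurableSpace X] {T : X → X} {μ : Measure X} [IsProbabilityMeasure μ] {c : ENNReal}

lemma exists_lt_measure_biUnion_preimage_iterate (hT : Ergodic T μ) {Z : Set X}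
    (hZ : MeasurableSet Z) (hμZ : μ Z ≠ 0) (hc : c < 1) :
    ∃ m : ℕ, c < μ (⋃ j ∈ Finset.range m, T^[j] ⁻¹' Z) := by
  set E := ⋃ j, T^[j] ⁻¹' Z
  have hE : MeasurableSet E := .iUnion fun j ↦ (hT.measurable.iterate j) hZ
  have hE_sub : T ⁻¹' E ⊆ E := by
    simp only [E, preimage_iUnion, iUnion_subset_iff]
    exact fun j ↦ subset_iUnion (fun j ↦ T^[j] ⁻¹' Z) (j + 1)
  have hμE : μ E = 1 := by
    rcases hT.ae_empty_or_univ_of_preimage_ae_le hE.nullMeasurableSet hE_sub.eventuallyLE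
      with h | h
    · refine absurd (measure_mono_null (subset_iUnion (fun j ↦ T^[j] ⁻¹' Z) 0) ?_) hμZ
      exact ae_eq_empty.1 h
    · rw [measure_congr h, measure_univ]
  have hmono : Monotone fun m ↦ ⋃ j ∈ Finset.range m, T^[j] ⁻¹' Z := fun m m' h ↦
    biUnion_mono (by gcongr) fun _ _ ↦ subset_rfl
  have hE_eq : ⋃ m, ⋃ j ∈ Finset.range m, T^[j] ⁻¹' Z = E :=
    subset_antisymm (iUnion_subset fun m ↦ iUnion₂_subset fun j _ ↦ subset_iUnion (T^[·] ⁻¹' Z) j)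
      (iUnion_subset fun j _ hx ↦
        mem_iUnion.2 ⟨j + 1, mem_iUnion₂.2 ⟨j, Finset.self_mem_range_succ j, hx⟩⟩)
  have htendsto := tendsto_measure_iUnion_atTop (μ := μ) hmono
  rw [hE_eq, hμE] at htendsto
  exact (htendsto.eventually_const_lt hc).exists

lemma exists_lt_measure_biUnion_preimage_iterate_of_frequently (hT : Ergodic T μ)
    {A : ℕ → Set X} (hA : ∀ n, MeasurableSet (A n)) {δ : ENNReal} (hδ : 0 < δ)
    (hAδ : ∃ᶠ n in atTop, δ ≤ μ (A n)) (hc : c < 1) :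
    ∃ m : ℕ, ∀ L, ∃ M,
      c < μ (⋃ p ∈ Finset.range m ×ˢ Finset.Ico L M, T^[p.1] ⁻¹' A p.2) := by
  set Z := limsup A atTop
  have hZ : MeasurableSet Z := .measurableSet_limsup hA
  have hμZ : δ ≤ μ Z := le_measure_limsup_of_frequently hA hAδ
  obtain ⟨m, hm⟩ := exists_lt_measure_biUnion_preimage_iterate hT hZ (hδ.trans_le hμZ).ne' hc
  refine ⟨m, fun L ↦ ?_⟩
  set V : ℕ → Set X := fun M ↦ ⋃ p ∈ Finset.range m ×ˢ Finset.Ico L M, T^[p.1] ⁻¹' A p.2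
  have hV_mono : Monotone V := fun M M' h ↦ biUnion_mono (by gcongr) fun _ _ ↦ subset_rfl
  have hsub : ⋃ j ∈ Finset.range m, T^[j] ⁻¹' Z ⊆ ⋃ M, V M := by
    refine iUnion₂_subset fun j hj x (hx : T^[j] x ∈ Z) ↦ ?_
    rw [mem_limsup_iff_frequently_mem] at hx
    obtain ⟨n, hLn, hxn⟩ := frequently_atTop.1 hx L
    refine mem_iUnion.2 ⟨n + 1, mem_iUnion₂.2 ⟨(j, n), ?_, hxn⟩⟩
    exact Finset.mk_mem_product hj (Finset.mem_Ico.2 ⟨hLn, n.lt_succ_self⟩)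
  exact ((tendsto_measure_iUnion_atTop hV_mono).eventually_const_lt
    (hm.trans_le (measure_mono hsub))).exists

end ReturnWindows

section LogGrowth

/-- The exponential growth rate `limsup (1/n) log (u n)` of a sequence of cardinalities. A vanishing
term counts as a `1`, since `Real.log 0 = 0`. -/
noncomputable def logGrowth (u : ℕ → ℕ) : EReal :=
  limsup (fun n : ℕ ↦ ((Real.log (u n) / n : ℝ) : EReal)) atTop

variable {u v : ℕ → ℕ} {c : ℝ}

lemma logGrowth_nonneg (u : ℕ → ℕ) : 0 ≤ logGrowth u :=
  le_limsup_of_frequently_le (Frequently.of_forall fun n ↦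
    EReal.coe_nonneg.2 (div_nonneg (Real.log_natCast_nonneg _) n.cast_nonneg))

lemma logGrowth_mono (h : ∀ n, u n ≤ v n) : logGrowth u ≤ logGrowth v := by
  refine limsup_le_limsup (Eventually.of_forall fun n ↦ EReal.coe_le_coe_iff.2 ?_)
  refine div_le_div_of_nonneg_right ?_ n.cast_nonneg
  rcases (u n).eq_zero_or_pos with h0 | h0
  · simpa [h0] using Real.log_natCast_nonneg (v n)
  · exact Real.log_le_log (by exact_mod_cast h0) (by exact_mod_cast h n)

lemma logGrowth_le (hc : 0 ≤ c) (h : ∀ᶠ n : ℕ in atTop, (u n : ℝ) ≤ Real.exp (c * n)) :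
    logGrowth u ≤ c := by
  refine limsup_le_of_le (by isBoundedDefault) ?_
  filter_upwards [h, eventually_gt_atTop 0] with n hn hn0
  rw [EReal.coe_le_coe_iff, div_le_iff₀ (by exact_mod_cast hn0)]
  rcases (u n).eq_zero_or_pos with h0 | h0
  · simpa [h0] using mul_nonneg hc n.cast_nonneg
  · rwa [Real.log_le_iff_le_exp (by exact_mod_cast h0)]

lemma eventually_le_exp_of_logGrowth_lt (h : logGrowth u < c) :
    ∀ᶠ n : ℕ in atTop, (u n : ℝ) ≤ Real.exp (n * c) := by
  filter_upwards [eventually_lt_of_limsup_lt h, eventually_gt_atTop 0] with n hn hn0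
  rw [EReal.coe_lt_coe_iff, div_lt_iff₀' (by exact_mod_cast hn0)] at hn
  exact (Real.le_exp_log _).trans (Real.exp_le_exp.2 hn.le)

end LogGrowth

section SeparatedSets

variable [MetricSpace X] {T : X → X} {n : ℕ} {ε : ℝ}

lemma sepEnt_eq_logGrowth (T : X → X) (K : Set X) (ε : ℝ) :
    sepEnt T K ε = logGrowth fun n ↦ sepNum T n K ε :=
  rfl

lemma katokEnt_eq_logGrowth [MeasurableSpace X] (T : X → X) (μ : Measure X) (ε δ : ℝ) :
    katokEnt T μ ε δ = logGrowth fun n ↦ katokNum T μ n ε δ :=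
  rfl

lemma hasDynCover_biUnion_dynBall (T : X → X) (n : ℕ) (ε : ℝ) (F : Finset X) :
    HasDynCover T (2 * ε) n (⋃ x ∈ F, dynBall T n x ε) F.card := by
  have cover_dynBall : ∀ x ∈ F, HasDynCover T (2 * ε) n (dynBall T n x ε) 1 := fun x _ ↦ by
    refine ⟨{dynBall T n x ε}, ?_, by simp, by simp⟩
    simp only [Finset.mem_singleton, forall_eq]
    intro y (hy : dynDist T n x y < ε) z (hz : dynDist T n x z < ε)
    linarith [dynDist_triangle_left T n y z x]
  simpa using HasDynCover.biUnion cover_dynBall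

lemma exists_biUnion_dynBall_eq_univ [CompactSpace X] (hT : Continuous T) (n : ℕ) (hε : 0 < ε) :
    ∃ F : Finset X, ⋃ x ∈ F, dynBall T n x ε = univ := by
  obtain ⟨F, hF⟩ := isCompact_univ.elim_finite_subcover (fun x ↦ dynBall T n x ε)
    (fun x ↦ isOpen_dynBall hT n x ε) fun x _ ↦ mem_iUnion.2 ⟨x, mem_dynBall_self T n x hε⟩
  exact ⟨F, univ_subset_iff.1 hF⟩

lemma exists_hasDynCover_univ [CompactSpace X] (hT : Continuous T) (n : ℕ) (hε : 0 < ε) :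
    ∃ k : ℕ, HasDynCover T ε n univ k := by
  obtain ⟨F, hF⟩ := exists_biUnion_dynBall_eq_univ hT n (half_pos hε)
  have hcover := hasDynCover_biUnion_dynBall T n (ε / 2) F
  rw [hF, mul_div_cancel₀ ε two_ne_zero] at hcover
  exact ⟨_, hcover⟩

lemma exists_hasDynCover_univ_exp_div_two [CompactSpace X] (hT : Continuous T) (n : ℕ)
    (hε : 0 < ε) : ∃ β, 0 ≤ β ∧ HasDynCover T ε n univ (Real.exp β / 2) := by
  obtain ⟨k, hk⟩ := exists_hasDynCover_univ hT n hε
  have one_le : 1 ≤ 2 * ((k : ℝ) + 1) := by linarith [k.cast_nonneg (α := ℝ)]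
  refine ⟨Real.log (2 * (k + 1)), Real.log_nonneg one_le, hk.mono subset_rfl ?_⟩
  rw [Real.exp_log (one_pos.trans_le one_le)]
  linarith

variable {K : Set X}

lemma HasDynCover.card_le {a : ℝ} (h : HasDynCover T ε n K a) {E : Finset X} (hEK : ↑E ⊆ K)
    (hE : ∀ x ∈ E, ∀ y ∈ E, x ≠ y → ε < dynDist T n x y) : (E.card : ℝ) ≤ a := by
  obtain ⟨F, hdiam, hcover, hcard⟩ := h
  choose! f hf hxf using fun x (hx : x ∈ E) ↦ hcover (hEK hx)
  have hf_inj : InjOn f E := fun x hx y hy hxy ↦ by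
    by_contra hne
    exact (hE x hx y hy hne).not_ge (hdiam _ (hf x hx) x (hxf x hx) y (hxy ▸ hxf y hy))
  exact (Nat.cast_le.2 (Finset.card_le_card_of_injOn f hf hf_inj)).trans hcard

lemma HasDynCover.sepNum_le {a : ℝ} (h : HasDynCover T ε n K a) : (sepNum T n K ε : ℝ) ≤ a := by
  suffices sepNum T n K ε ≤ ⌊a⌋₊ from (Nat.cast_le.2 this).trans (Nat.floor_le h.nonneg)
  refine csSup_le ⟨0, ∅, by simp⟩ ?_
  rintro m ⟨E, hEK, hE, rfl⟩
  exact Nat.le_floor (h.card_le hEK hE)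

variable [CompactSpace X]

lemma card_le_sepNum (hT : Continuous T) (hε : 0 < ε) {E : Finset X} (hEK : ↑E ⊆ K)
    (hE : ∀ x ∈ E, ∀ y ∈ E, x ≠ y → ε < dynDist T n x y) : E.card ≤ sepNum T n K ε := by
  obtain ⟨k, hk⟩ := exists_hasDynCover_univ hT n hε
  refine le_csSup ⟨k, ?_⟩ ⟨E, hEK, hE, rfl⟩
  rintro m ⟨E', -, hE', rfl⟩
  exact_mod_cast hk.card_le (subset_univ _) hE'

lemma exists_card_eq_sepNum (hT : Continuous T) (n : ℕ) (K : Set X) (hε : 0 < ε) :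
    ∃ E : Finset X, ↑E ⊆ K ∧ (∀ x ∈ E, ∀ y ∈ E, x ≠ y → ε < dynDist T n x y) ∧
      E.card = sepNum T n K ε := by
  refine Nat.sSup_mem (s := {m | ∃ E : Finset X, ↑E ⊆ K ∧
    (∀ x ∈ E, ∀ y ∈ E, x ≠ y → ε < dynDist T n x y) ∧ E.card = m}) ⟨0, ∅, by simp⟩
    ⟨sepNum T n K ε, ?_⟩
  rintro m ⟨E, hEK, hE, rfl⟩
  exact card_le_sepNum hT hε hEK hE

lemma exists_card_eq_sepNum_spanning (hT : Continuous T) (n : ℕ) (K : Set X) (hε : 0 < ε) :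
    ∃ E : Finset X, (∀ y ∈ K, ∃ x ∈ E, dynDist T n x y ≤ ε) ∧ E.card = sepNum T n K ε := by
  classical
  obtain ⟨E, hEK, hE, hcard⟩ := exists_card_eq_sepNum hT n K hε
  refine ⟨E, fun y hyK ↦ ?_, hcard⟩
  by_contra! hy
  have hyE : y ∉ E := fun hyE ↦ by linarith [hy y hyE, dynDist_self T n y]
  have hinsert := card_le_sepNum (E := insert y E) hT hε
    (by simpa using insert_subset hyK hEK) (by
      simp only [Finset.forall_mem_insert]
      refine ⟨⟨fun h ↦ absurd rfl h, fun x hx _ ↦ dynDist_comm T n y x ▸ hy x hx⟩,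
        fun x hx ↦ ⟨fun _ ↦ hy x hx, fun z hz ↦ hE x hx z hz⟩⟩)
  rw [Finset.card_insert_of_notMem hyE, ← hcard] at hinsert
  lia

end SeparatedSets

section KatokEntropy

variable [MetricSpace X] [CompactSpace X] [MeasurableSpace X] {T : X → X} {μ : Measure X}
  [IsProbabilityMeasure μ] {ε δ : ℝ}

lemma katokNum_le_sepNum (hT : Continuous T) (n : ℕ) {ε' : ℝ} (hε' : 0 < ε') (hε : ε' < ε)
    (hδ : δ < 1) : katokNum T μ n ε δ ≤ sepNum T n univ ε' := by
  obtain ⟨E, hE, hcard⟩ := exists_card_eq_sepNum_spanning hT n univ hε'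
  have hE_univ : ⋃ x ∈ E, dynBall T n x ε = univ := eq_univ_of_forall fun y ↦
    let ⟨x, hx, hxy⟩ := hE y (mem_univ y)
    mem_iUnion₂.2 ⟨x, hx, hxy.trans_lt hε⟩
  refine Nat.sInf_le ⟨E, ?_, hcard⟩
  rw [hE_univ, measure_univ]
  exact ENNReal.ofReal_lt_one.2 hδ

lemma katokEnt_le_sepEnt (hT : Continuous T) {ε' : ℝ} (hε' : 0 < ε') (hε : ε' < ε) (hδ : δ < 1) :
    katokEnt T μ ε δ ≤ sepEnt T univ ε' := by
  rw [katokEnt_eq_logGrowth, sepEnt_eq_logGrowth]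
  exact logGrowth_mono fun n ↦ katokNum_le_sepNum hT n hε' hε hδ

lemma exists_card_eq_katokNum (hT : Continuous T) (n : ℕ) (hε : 0 < ε) (hδ : δ < 1) :
    ∃ F : Finset X, ENNReal.ofReal δ < μ (⋃ x ∈ F, dynBall T n x ε) ∧
      F.card = katokNum T μ n ε δ := by
  obtain ⟨F, hF⟩ := exists_biUnion_dynBall_eq_univ hT n hε
  refine Nat.sInf_mem (s := {m | ∃ F : Finset X,
    ENNReal.ofReal δ < μ (⋃ x ∈ F, dynBall T n x ε) ∧ F.card = m}) ⟨F.card, F, ?_, rfl⟩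
  rw [hF, measure_univ]
  exact ENNReal.ofReal_lt_one.2 hδ

lemma exists_isOpen_hasDynCover_of_katokEnt_lt (hT : Continuous T) (hε : 0 < ε) (hδ : δ < 1)
    {s : ℝ} (h : katokEnt T μ ε δ < s) :
    ∃ A : ℕ → Set X, (∀ n, IsOpen (A n)) ∧ (∀ n, ENNReal.ofReal δ ≤ μ (A n)) ∧
      ∀ᶠ n : ℕ in atTop, HasDynCover T (2 * ε) n (A n) (Real.exp (n * s)) := by
  rw [katokEnt_eq_logGrowth] at h
  choose F hF hcard using fun n ↦ exists_card_eq_katokNum (μ := μ) hT n hε hδ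
  refine ⟨fun n ↦ ⋃ x ∈ F n, dynBall T n x ε,
    fun n ↦ isOpen_biUnion fun x _ ↦ isOpen_dynBall hT n x ε, fun n ↦ (hF n).le, ?_⟩
  filter_upwards [eventually_le_exp_of_logGrowth_lt h] with n hn
  exact (hasDynCover_biUnion_dynBall T n ε (F n)).mono subset_rfl (by rwa [hcard])

end KatokEntropy

section CodableNeighborhoods

variable [MetricSpace X] {T : X → X} {r s s₁ β : ℝ}

lemma isCodable_biUnion_of_sum_le_half {ι : Type*} {J : Finset ι} {n : ι → ℕ} {A : ι → Set X}
    {a : ι → ℝ} (hr : 0 ≤ r) (hs : 0 ≤ s) (hβ : 0 ≤ β) (hn : ∀ j ∈ J, 1 ≤ n j)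
    (hA : ∀ j ∈ J, HasDynCover T r (n j) (A j) (a j))
    (hsum : ∑ j ∈ J, a j * Real.exp (-(s * n j)) ≤ 1 / 2)
    (hP : HasDynCover T r 1 univ (Real.exp β / 2)) : IsCodable T r s β (⋃ j ∈ J, A j) := by
  have hmiss : Real.exp β / 2 * Real.exp (-β) = 1 / 2 := by
    rw [div_mul_eq_mul_div, ← Real.exp_add, add_neg_cancel, Real.exp_zero]
  exact isCodable_biUnion hr hs hβ hn hA hP (by linarith)

/- The words visiting `T^[j] ⁻¹' A n` have length `j + n`: the first `j` letters are arbitrary. -/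
lemma eventually_sum_pow_mul_exp_le {P : ℝ} (hP : 0 ≤ P) (hs₁ : 0 ≤ s₁) (hss₁ : s < s₁) (m : ℕ)
    {τ : ℝ} (hτ : 0 < τ) :
    ∀ᶠ L : ℕ in atTop, ∀ M, ∑ p ∈ Finset.range m ×ˢ Finset.Ico L M,
      P ^ p.1 * Real.exp (p.2 * s) * Real.exp (-(s₁ * (p.1 + p.2 : ℕ))) ≤ τ := by
  set q := Real.exp (s - s₁)
  have hq : q < 1 := Real.exp_lt_one_iff.2 (sub_neg.2 hss₁)
  set S := ∑ j ∈ Finset.range m, P ^ j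
  have htail : Tendsto (fun L : ℕ ↦ S * (q ^ L / (1 - q))) atTop (𝓝 0) := by
    simpa using ((tendsto_pow_atTop_nhds_zero_of_lt_one (Real.exp_pos _).le hq).div_const
      (1 - q)).const_mul S
  filter_upwards [htail.eventually_le_const hτ] with L hL M
  have weight_le : ∀ j n : ℕ,
      P ^ j * Real.exp (n * s) * Real.exp (-(s₁ * (j + n : ℕ))) ≤ P ^ j * q ^ n := by
    intro j n
    rw [mul_assoc, ← Real.exp_add, ← Real.exp_nat_mul]
    refine mul_le_mul_of_nonneg_left (Real.exp_le_exp.2 ?_) (pow_nonneg hP j)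
    push_cast
    linarith [mul_nonneg hs₁ j.cast_nonneg]
  calc ∑ p ∈ Finset.range m ×ˢ Finset.Ico L M,
        P ^ p.1 * Real.exp (p.2 * s) * Real.exp (-(s₁ * (p.1 + p.2 : ℕ)))
      ≤ ∑ p ∈ Finset.range m ×ˢ Finset.Ico L M, P ^ p.1 * q ^ p.2 :=
        Finset.sum_le_sum fun p _ ↦ weight_le p.1 p.2
    _ = S * ∑ n ∈ Finset.Ico L M, q ^ n := by rw [Finset.sum_product, Finset.sum_mul_sum]
    _ ≤ S * (q ^ L / (1 - q)) := by
        gcongr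
        exact geom_sum_Ico_le_of_lt_one (Real.exp_pos _).le hq
    _ ≤ τ := hL

lemma exists_isOpen_isCodable [MeasurableSpace X] [OpensMeasurableSpace X] {μ : Measure X}
    [IsProbabilityMeasure μ] (hTc : Continuous T) (hT : Ergodic T μ) (hr : 0 ≤ r) (hs₁ : 0 ≤ s₁)
    (hss₁ : s < s₁) (hβ : 0 ≤ β) (hP : HasDynCover T r 1 univ (Real.exp β / 2))
    {A : ℕ → Set X} (hA_open : ∀ n, IsOpen (A n)) {δ : ENNReal} (hδ : 0 < δ)
    (hAδ : ∃ᶠ n in atTop, δ ≤ μ (A n))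
    (hA : ∀ᶠ n : ℕ in atTop, HasDynCover T r n (A n) (Real.exp (n * s)))
    {c : ENNReal} (hc : c < 1) :
    ∃ U, IsOpen U ∧ c < μ U ∧ IsCodable T r s₁ β U := by
  obtain ⟨m, hm⟩ := exists_lt_measure_biUnion_preimage_iterate_of_frequently hT
    (fun n ↦ (hA_open n).measurableSet) hδ hAδ hc
  obtain ⟨L, hL_sum, hL_pos, hLA⟩ := ((eventually_sum_pow_mul_exp_le hP.nonneg hs₁ hss₁ m
    one_half_pos).and ((eventually_ge_atTop 1).and (eventually_forall_ge_atTop.2 hA))).exists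
  obtain ⟨M, hM⟩ := hm L
  refine ⟨_, isOpen_biUnion fun p _ ↦ (hA_open p.2).preimage (hTc.iterate p.1), hM, ?_⟩
  refine isCodable_biUnion_of_sum_le_half (n := fun p ↦ p.1 + p.2)
    (a := fun p ↦ (Real.exp β / 2) ^ p.1 * Real.exp (p.2 * s)) hr hs₁ hβ ?_ ?_ (hL_sum M) hP
  · intro p hp
    exact hL_pos.trans ((Finset.mem_Ico.1 (Finset.mem_product.1 hp).2).1.trans
      (Nat.le_add_left _ _))
  · intro p hp
    simpa only [univ_inter] using (hP.univ_pow hr p.1).inter_preimage hr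
      (hLA p.2 (Finset.mem_Ico.1 (Finset.mem_product.1 hp).2).1)

lemma IsCodable.eventually_hasDynCover {U : Set X} (hU : IsCodable T r s β U) (hβ : 0 ≤ β)
    {θ : ℝ} (hθ : 0 ≤ θ) (hss₁ : s + β * θ < s₁) {τ : ℝ} (hτ : 0 < τ) :
    ∀ᶠ K : ℕ in atTop,
      HasDynCover T r K (fewMisses T U K ⌊θ * K⌋₊) (τ * Real.exp (s₁ * K)) := by
  obtain ⟨C, hC⟩ := hU
  have hC_nonneg : 0 ≤ C := nonneg_of_mul_nonneg_left (hC 0 0).nonneg (Real.exp_pos _)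
  have hdecay : Tendsto (fun K : ℕ ↦ C * Real.exp (s + β * θ - s₁) ^ K) atTop (𝓝 0) := by
    simpa using (tendsto_pow_atTop_nhds_zero_of_lt_one (Real.exp_pos _).le
      (Real.exp_lt_one_iff.2 (sub_neg.2 hss₁))).const_mul C
  filter_upwards [hdecay.eventually_le_const hτ] with K hK
  refine (hC K ⌊θ * K⌋₊).mono subset_rfl ?_
  have hfloor : (⌊θ * K⌋₊ : ℝ) ≤ θ * K := Nat.floor_le (by positivity)
  calc C * Real.exp (s * K + β * ⌊θ * K⌋₊)
      ≤ C * Real.exp (s * K + β * (θ * K)) := by gcongr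
    _ = C * Real.exp (s + β * θ - s₁) ^ K * Real.exp (s₁ * K) := by
      rw [mul_assoc, ← Real.exp_nat_mul, ← Real.exp_add]
      ring_nf
    _ ≤ τ * Real.exp (s₁ * K) := by gcongr

lemma IsCodable.exists_isOpen_hasDynCover [MeasurableSpace X] [BorelSpace X] (hT : Continuous T)
    {U : Set X} (hU_open : IsOpen U) (hU : IsCodable T r s β U) (hβ : 0 ≤ β) {θ : ℝ} (hθ : 0 < θ)
    (hss₁ : s + β * θ < s₁) {τ : ℝ} (hτ : 0 < τ) :
    ∃ (A : Set X) (K : ℕ), IsOpen A ∧ 1 ≤ K ∧ HasDynCover T r K A (τ * Real.exp (s₁ * K)) ∧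
      ∀ μ ∈ ergodicMeasures T, μ Uᶜ ≤ ENNReal.ofReal (θ * θ) → μ Aᶜ ≤ ENNReal.ofReal θ := by
  obtain ⟨K, hK_cover, hK_pos⟩ := ((hU.eventually_hasDynCover hβ hθ.le hss₁ hτ).and
    (eventually_ge_atTop 1)).exists
  exact ⟨_, K, isOpen_fewMisses hT hU_open K _, hK_pos, hK_cover, fun μ hμ hμU ↦
    measure_compl_fewMisses_le hμ.2.toMeasurePreserving hU_open.measurableSet hθ hμU K⟩

end CodableNeighborhoods

section Globalization

variable [MetricSpace X] [CompactSpace X] [MeasurableSpace X] [BorelSpace X]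
  {T : X → X} {r s s₁ β : ℝ}

lemma exists_seq_isOpen_isCodable [Nonempty X] (hT : Continuous T) {c : ENNReal}
    (h : ∀ μ ∈ ergodicMeasures T, ∃ U, IsOpen U ∧ c < μ U ∧ IsCodable T r s β U) :
    ∃ W : ℕ → Set X, (∀ i, IsOpen (W i)) ∧ (∀ i, IsCodable T r s β (W i)) ∧
      ∀ μ ∈ ergodicMeasures T, ∃ i, c < μ (W i) := by
  obtain ⟨𝒲, hcount, hopen, happrox⟩ := exists_countable_isOpen_approx (X := X)
  have exists_mem : ∀ μ ∈ ergodicMeasures T, ∃ W ∈ {W ∈ 𝒲 | IsCodable T r s β W}, c < μ W := by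
    intro μ hμ
    obtain ⟨U, hU_open, hcU, hU⟩ := h μ hμ
    have := hμ.1
    obtain ⟨W, hW, hWU, hcW⟩ := happrox μ U c hU_open hcU
    exact ⟨W, ⟨hW, hU.anti hWU⟩, hcW⟩
  have hne : {W ∈ 𝒲 | IsCodable T r s β W}.Nonempty := by
    obtain ⟨μ, hμ⟩ := ergodicMeasures_nonempty hT
    exact (exists_mem μ hμ).imp fun W hW ↦ hW.1
  obtain ⟨W, hW⟩ := (hcount.mono (sep_subset _ _)).exists_eq_range hne
  have hW_mem : ∀ i, W i ∈ {W ∈ 𝒲 | IsCodable T r s β W} := fun i ↦ hW ▸ mem_range_self i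
  refine ⟨W, fun i ↦ hopen _ (hW_mem i).1, fun i ↦ (hW_mem i).2, fun μ hμ ↦ ?_⟩
  obtain ⟨V, hV, hcV⟩ := exists_mem μ hμ
  obtain ⟨i, rfl⟩ : V ∈ range W := hW ▸ hV
  exact ⟨i, hcV⟩

lemma exists_isCodable_forall_missCount_le (hT : Continuous T) (hr : 0 ≤ r) (hs : 0 ≤ s)
    (hβ : 0 ≤ β) (hP : HasDynCover T r 1 univ (Real.exp β / 2)) {A : ℕ → Set X} {K : ℕ → ℕ}
    (hA_open : ∀ i, IsOpen (A i)) (hK : ∀ i, 1 ≤ K i)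
    (hA : ∀ i, HasDynCover T r (K i) (A i) ((1 / 2) ^ (i + 2) * Real.exp (s * K i)))
    {θ : ℝ} (hμA : ∀ μ ∈ ergodicMeasures T, ∃ i, μ (A i)ᶜ < ENNReal.ofReal θ) :
    ∃ V, IsCodable T r s β V ∧ ∀ᶠ N : ℕ in atTop, ∀ x, (missCount T V N x : ℝ) ≤ θ * N := by
  have hμ_iUnion : ∀ μ ∈ ergodicMeasures T,
      μ (⋃ q, ⋃ i ∈ Finset.range q, A i)ᶜ < ENNReal.ofReal θ := by
    intro μ hμ
    obtain ⟨i, hi⟩ := hμA μ hμ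
    have hAi : A i ⊆ ⋃ q, ⋃ i ∈ Finset.range q, A i := fun x hx ↦
      mem_iUnion.2 ⟨i + 1, mem_iUnion₂.2 ⟨i, Finset.self_mem_range_succ i, hx⟩⟩
    exact (measure_mono (compl_subset_compl.2 hAi)).trans_lt hi
  obtain ⟨q, N₀, hq⟩ := exists_forall_missCount_le hT
    (fun q ↦ isOpen_biUnion fun i _ ↦ hA_open i)
    (fun q q' h ↦ biUnion_mono (by gcongr) fun _ _ ↦ subset_rfl) hμ_iUnion
  refine ⟨_, ?_, eventually_atTop.2 ⟨N₀, hq⟩⟩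
  refine isCodable_biUnion_of_sum_le_half hr hs hβ (fun i _ ↦ hK i) (fun i _ ↦ hA i) ?_ hP
  simp only [mul_assoc, ← Real.exp_add, add_neg_cancel, Real.exp_zero, pow_add, mul_one,
    ← Finset.sum_mul]
  linarith [sum_geometric_two_le q]

lemma exists_isCodable_of_forall_exists_isOpen [Nonempty X] (hT : Continuous T) (hr : 0 ≤ r)
    (hs₁ : 0 ≤ s₁) (hβ : 0 ≤ β) (hP : HasDynCover T r 1 univ (Real.exp β / 2))
    (h : ∀ μ ∈ ergodicMeasures T, ∀ c < 1, ∃ U, IsOpen U ∧ c < μ U ∧ IsCodable T r s β U)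
    {θ : ℝ} (hθ : 0 < θ) (hss₁ : s + β * θ < s₁) :
    ∃ V, IsCodable T r s₁ β V ∧
      ∀ᶠ N : ℕ in atTop, ∀ x, (missCount T V N x : ℝ) ≤ 2 * θ * N := by
  have hc : 1 - ENNReal.ofReal (θ * θ) < 1 :=
    ENNReal.sub_lt_self ENNReal.one_ne_top one_ne_zero
      (ENNReal.ofReal_pos.2 (mul_pos hθ hθ)).ne'
  obtain ⟨W, hW_open, hW, hμW⟩ := exists_seq_isOpen_isCodable hT fun μ hμ ↦ h μ hμ _ hc
  choose A K hA_open hK hA hμA using fun i ↦ (hW i).exists_isOpen_hasDynCover hT (hW_open i) hβ hθ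
    hss₁ (τ := (1 / 2) ^ (i + 2)) (by positivity)
  refine exists_isCodable_forall_missCount_le hT hr hs₁ hβ hP hA_open hK hA fun μ hμ ↦ ?_
  have := hμ.1
  obtain ⟨i, hi⟩ := hμW μ hμ
  have hμWi : μ (W i)ᶜ ≤ ENNReal.ofReal (θ * θ) := by
    rw [prob_compl_eq_one_sub (hW_open i).measurableSet, tsub_le_iff_left]
    exact tsub_le_iff_right.1 hi.le
  refine ⟨i, (hμA i μ hμ hμWi).trans_lt ?_⟩
  exact (ENNReal.ofReal_lt_ofReal_iff (by positivity)).2 (by linarith)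

lemma sepEnt_le_of_forall_katokEnt_lt [Nonempty X] (hT : Continuous T) {ε δ : ℝ} (hε : 0 < ε)
    (hδ : δ ∈ Ioo (0 : ℝ) 1) (h : ∀ μ ∈ ergodicMeasures T, katokEnt T μ ε δ < s) (hss₁ : s < s₁) :
    sepEnt T univ (2 * ε) ≤ s₁ := by
  have hr : 0 < 2 * ε := by positivity
  have hs : 0 ≤ s := by
    obtain ⟨μ, hμ⟩ := ergodicMeasures_nonempty hT
    exact EReal.coe_nonneg.1 ((logGrowth_nonneg _).trans (h μ hμ).le)
  obtain ⟨β, hβ, hP⟩ := exists_hasDynCover_univ_exp_div_two hT 1 hr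
  set η := (s₁ - s) / 4 with hη
  have hη_pos : 0 < η := by linarith
  set θ := η / (β + 1)
  have hθ : 0 < θ := by positivity
  have hβθ : β * θ < η := by
    rw [mul_div_left_comm]
    exact mul_lt_of_lt_one_right hη_pos ((div_lt_one (by positivity)).2 (lt_add_one β))
  have local_codable : ∀ μ ∈ ergodicMeasures T, ∀ c < 1,
      ∃ U, IsOpen U ∧ c < μ U ∧ IsCodable T (2 * ε) (s + η) β U := by
    intro μ hμ c hc
    have := hμ.1
    obtain ⟨A, hA_open, hAδ, hA⟩ := exists_isOpen_hasDynCover_of_katokEnt_lt hT hε hδ.2 (h μ hμ)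
    exact exists_isOpen_isCodable hT hμ.2 hr.le (by positivity) (lt_add_of_pos_right s hη_pos) hβ hP
      hA_open (ENNReal.ofReal_pos.2 hδ.1) (Frequently.of_forall hAδ) hA hc
  obtain ⟨V, hV, hmiss⟩ := exists_isCodable_of_forall_exists_isOpen hT hr.le (by positivity) hβ hP
    local_codable hθ (s₁ := s + 2 * η) (by linarith)
  have hcover := hV.eventually_hasDynCover hβ (mul_pos two_pos hθ).le (s₁ := s₁)
    (by linarith) one_pos
  rw [sepEnt_eq_logGrowth]
  refine logGrowth_le (hs.trans hss₁.le) ?_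
  filter_upwards [hcover, hmiss] with N hN hmissN
  rw [one_mul] at hN
  exact (hN.mono (fun x _ ↦ Nat.le_floor (hmissN x)) le_rfl).sepNum_le

lemma sepEnt_le_iSup_katokEnt [Nonempty X] (hT : Continuous T) {ε δ : ℝ} (hε : 0 < ε)
    (hδ : δ ∈ Ioo (0 : ℝ) 1) :
    sepEnt T univ (2 * ε) ≤ ⨆ μ ∈ ergodicMeasures T, katokEnt T μ ε δ := by
  refine EReal.le_of_forall_lt_iff_le.1 fun s₁ hs₁ ↦ ?_
  obtain ⟨s, hs, hss₁⟩ := EReal.lt_iff_exists_real_btwn.1 hs₁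
  exact sepEnt_le_of_forall_katokEnt_lt hT hε hδ (fun μ hμ ↦ (le_iSup₂ (f := fun μ _ ↦
    katokEnt T μ ε δ) μ hμ).trans_lt hs) (EReal.coe_lt_coe_iff.1 hss₁)

end Globalization

section Rescaling

lemma liminf_div_log_le_of_le_comp_mul {f g : ℝ → EReal} {κ : ℝ} (hκ : 0 < κ)
    (h : ∀ ε, 0 < ε → f ε ≤ g (κ * ε)) :
    liminf (fun ε : ℝ ↦ f ε / ((Real.log (1 / ε) : ℝ) : EReal)) (𝓝[>] 0) ≤
      liminf (fun ε : ℝ ↦ g ε / ((Real.log (1 / ε) : ℝ) : EReal)) (𝓝[>] 0) := by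
  refine EReal.le_of_forall_lt_iff_le.1 fun z hz ↦ ?_
  obtain ⟨c, hc, hcz⟩ := EReal.lt_iff_exists_real_btwn.1 hz
  rw [EReal.coe_lt_coe_iff] at hcz
  have hfreq : ∃ᶠ ε in 𝓝[>] (0 : ℝ), g ε / ((Real.log (1 / ε) : ℝ) : EReal) < c :=
    frequently_lt_of_liminf_lt (by isBoundedDefault) hc
  have hlog : Tendsto (fun ε : ℝ ↦ Real.log (1 / ε)) (𝓝[>] 0) atTop := by
    simp only [one_div]
    exact Real.tendsto_log_atTop.comp tendsto_inv_nhdsGT_zero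
  have hscale : Tendsto (fun ε ↦ κ⁻¹ * ε) (𝓝[>] 0) (𝓝[>] 0) := fun _ ↦
    eventually_nhdsGT_zero_mul_left (inv_pos.2 hκ)
  refine liminf_le_of_frequently_le (hscale.frequently ?_) (by isBoundedDefault)
  refine (hfreq.and_eventually ((hlog.eventually_gt_atTop 0).and
    ((hlog.eventually_gt_atTop (-Real.log κ)).and
      ((hlog.eventually_ge_atTop (-z * Real.log κ / (z - c))).and self_mem_nhdsWithin)))).mono ?_
  rintro ε ⟨hlt, hL_pos, hL_gt, hL_ge, hε : 0 < ε⟩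
  have hlog_scale : Real.log (1 / (κ⁻¹ * ε)) = Real.log (1 / ε) + Real.log κ := by
    rw [← Real.log_mul (by positivity) hκ.ne']
    congr 1
    field_simp
  have hfg : f (κ⁻¹ * ε) ≤ g ε := by simpa [hκ.ne'] using h (κ⁻¹ * ε) (by positivity)
  have hg : g ε < ((c * Real.log (1 / ε) : ℝ) : EReal) := by
    rw [EReal.coe_mul]
    exact (EReal.div_lt_iff (EReal.coe_pos.2 hL_pos) (EReal.coe_ne_top _)).1 hlt
  rw [hlog_scale, EReal.div_le_iff_le_mul (EReal.coe_pos.2 (by linarith)) (EReal.coe_ne_top _),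
    ← EReal.coe_mul]
  refine (hfg.trans hg.le).trans (EReal.coe_le_coe_iff.2 ?_)
  rw [div_le_iff₀ (sub_pos.2 hcz)] at hL_ge
  linarith

end Rescaling

section Theorems

variable [MetricSpace X] [CompactSpace X] [Nonempty X] [MeasurableSpace X] [BorelSpace X]

theorem lower_mdim_eq_liminf_katok_general (T : X → X) (hT : Continuous T)
    (δ : ℝ) (hδ : δ ∈ Set.Ioo (0 : ℝ) 1) :
    mdimLower T = liminf (fun ε : ℝ ↦
      (⨆ μ ∈ ergodicMeasures T, katokEnt T μ ε δ)
        / ((Real.log (1 / ε) : ℝ) : EReal)) (𝓝[>] (0 : ℝ)) := by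
  refine le_antisymm
    (liminf_div_log_le_of_le_comp_mul one_half_pos fun ε hε ↦ ?_)
    (liminf_div_log_le_of_le_comp_mul one_half_pos fun ε hε ↦ iSup₂_le fun μ hμ ↦ ?_)
  · simpa using sepEnt_le_iSup_katokEnt hT (mul_pos one_half_pos hε) hδ
  · have := hμ.1
    exact katokEnt_le_sepEnt hT (by positivity) (by linarith) hδ.2

/-- Variational principle for the lower metric mean dimension in terms of Katok's
entropy (Theorem 4.2, second part). -/
theorem lower_mdim_eq_liminf_katok (T : X → X) (hT : IsHomeomorph T)
    (δ : ℝ) (hδ : δ ∈ Set.Ioo (0:ℝ) 1) :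
    mdimLower T = liminf (fun ε : ℝ =>
      (⨆ μ ∈ ergodicMeasures T, katokEnt T μ ε δ)
        / ((Real.log (1 / ε) : ℝ) : EReal)) (𝓝[>] (0:ℝ)) :=
  lower_mdim_eq_liminf_katok_general T hT.continuous δ hδ

end Theorems
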